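/- arXiv:dg-ga/9511009 — 6 statements merged into one kernel-verified Lean document; each statement's English description precedes it below -/
import Mathlib

section
/- Let ε ∈ (0, π/2), let k ≥ 1 be a natural number, and let (a_n)_{n∈ℕ} be a sequence of nonzero complex numbers with |arg a_n| ≤ π/2 − ε for all n and ∑_n |a_n|^{−k} < ∞. Then for every t > 0 the theta series Θ(t) := ∑_n e^{−t·a_n} converges absolutely, and for every s ∈ ℂ with Re(s) > k the identity Γ(s) · ∑_n a_n^{−s} = ∫₀^∞ t^{s−1} · Θ(t) dt holds, the integral being absolutely convergent. -/
open Complex Real MeasureTheory Set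

lemma aux_int {σ r : ℝ} (hσ : 0 < σ) (hr : 0 < r) :
    IntegrableOn (fun t : ℝ => t ^ (σ - 1) * Real.exp (-(r * t))) (Ioi 0) := by
  refine .of_integral_ne_zero ?_
  rw [Real.integral_rpow_mul_exp_neg_mul_Ioi hσ hr]
  have := Real.Gamma_pos_of_pos hσ
  positivity

lemma aux_norm (s z : ℂ) {t : ℝ} (ht : 0 < t) :
    ‖(t : ℂ) ^ (s - 1) * Complex.exp (-(t : ℂ) * z)‖ =
      t ^ (s.re - 1) * Real.exp (-(z.re * t)) := by
  rw [norm_mul, norm_cpow_eq_rpow_re_of_pos ht, Complex.norm_exp]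
  simp [mul_comm]

lemma aux_meas (s z : ℂ) : AEStronglyMeasurable
    (fun t : ℝ => (t : ℂ) ^ (s - 1) * Complex.exp (-(t : ℂ) * z)) (volume.restrict (Ioi 0)) := by
  refine ContinuousOn.aestronglyMeasurable ?_ measurableSet_Ioi
  refine ContinuousOn.mul ?_ (by fun_prop)
  refine ContinuousOn.cpow_const (by fun_prop) ?_
  intro t ht
  exact Or.inl (by simpa using ht)

lemma aux_cint {s z : ℂ} (hs : 0 < s.re) (hz : 0 < z.re) :
    IntegrableOn (fun t : ℝ => (t : ℂ) ^ (s - 1) * Complex.exp (-(t : ℂ) * z)) (Ioi 0) := by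
  refine (aux_int hs hz).mono' (aux_meas s z) ?_
  refine (ae_restrict_iff' measurableSet_Ioi).mpr (ae_of_all _ fun t ht => ?_)
  exact (aux_norm s z ht).le

lemma aux_deriv {s z₀ : ℂ} (hs : 0 < s.re) (hz : 0 < z₀.re) :
    DifferentiableAt ℂ (fun z : ℂ => ∫ t in Ioi (0 : ℝ),
      (t : ℂ) ^ (s - 1) * Complex.exp (-(t : ℂ) * z)) z₀ := by
  have hopen : IsOpen {z : ℂ | z₀.re / 2 < z.re} := isOpen_lt continuous_const continuous_re
  refine (hasDerivAt_integral_of_dominated_loc_of_deriv_le (𝕜 := ℂ)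
    (s := {z : ℂ | z₀.re / 2 < z.re})
    (bound := fun t : ℝ => t ^ ((s.re + 1) - 1) * Real.exp (-(z₀.re / 2 * t)))
    (F' := fun z t => -((t : ℂ) ^ ((s + 1) - 1) * Complex.exp (-(t : ℂ) * z)))
    (hopen.mem_nhds (by simp; linarith)) (Filter.Eventually.of_forall fun z => aux_meas s z)
    (aux_cint hs hz) (aux_meas _ _).neg ?_ (aux_int (by linarith) (by linarith)) ?_).2.differentiableAt
  · refine (ae_restrict_iff' measurableSet_Ioi).mpr (ae_of_all _ fun t ht z hz' => ?_)
    have ht' : 0 < t := ht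
    have hz2 : z₀.re / 2 < z.re := hz'
    rw [norm_neg, aux_norm _ _ ht']
    simp only [add_re, one_re]
    gcongr
  · refine (ae_restrict_iff' measurableSet_Ioi).mpr (ae_of_all _ fun t ht z hz' => ?_)
    have ht' : (t : ℂ) ≠ 0 := by exact_mod_cast (ne_of_gt ht)
    have h1 : HasDerivAt (fun z : ℂ => -(t : ℂ) * z) (-(t : ℂ)) z := by
      simpa using (hasDerivAt_id z).const_mul (-(t : ℂ))
    have h2 := (h1.cexp).const_mul ((t : ℂ) ^ (s - 1))
    have h3 : -((t : ℂ) ^ ((s + 1) - 1) * Complex.exp (-(t : ℂ) * z)) =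
        (t : ℂ) ^ (s - 1) * (Complex.exp (-(t : ℂ) * z) * -(t : ℂ)) := by
      rw [show s + 1 - 1 = (s - 1) + 1 by ring, cpow_add _ _ ht', cpow_one]
      ring
    simp only [h3]
    exact h2

lemma aux_mellin {s z : ℂ} (hs : 0 < s.re) (hz : 0 < z.re) :
    ∫ t in Ioi (0 : ℝ), (t : ℂ) ^ (s - 1) * Complex.exp (-(t : ℂ) * z) =
      Complex.Gamma s * Complex.exp (-s * Complex.log z) := by
  have hopen : IsOpen {z : ℂ | 0 < z.re} := isOpen_lt continuous_const continuous_re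
  have hconv : Convex ℝ {z : ℂ | 0 < z.re} := convex_halfSpace_re_gt 0
  have h1 : AnalyticOnNhd ℂ (fun z : ℂ => ∫ t in Ioi (0 : ℝ),
      (t : ℂ) ^ (s - 1) * Complex.exp (-(t : ℂ) * z)) {z : ℂ | 0 < z.re} :=
    DifferentiableOn.analyticOnNhd (fun z hz => (aux_deriv hs hz).differentiableWithinAt) hopen
  have h2 : AnalyticOnNhd ℂ (fun z : ℂ => Complex.Gamma s * Complex.exp (-s * Complex.log z))
      {z : ℂ | 0 < z.re} := by
    refine DifferentiableOn.analyticOnNhd (fun z hz => ?_) hopen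
    have : z ∈ slitPlane := Or.inl hz
    exact (((differentiableAt_log this).const_mul (-s)).cexp.const_mul _).differentiableWithinAt
  refine h1.eqOn_of_preconnected_of_frequently_eq h2 hconv.isPreconnected
    (z₀ := 1) (by simp) ?_ hz
  have hreal : ∀ r : ℝ, 0 < r → ∫ t in Ioi (0 : ℝ), (t : ℂ) ^ (s - 1) * Complex.exp (-(t : ℂ) * r)
      = Complex.Gamma s * Complex.exp (-s * Complex.log r) := by
    intro r hr
    have hr' : (r : ℂ) ≠ 0 := by exact_mod_cast hr.ne'
    have := Complex.integral_cpow_mul_exp_neg_mul_Ioi hs hr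
    rw [one_div, inv_cpow _ _ (by rw [arg_ofReal_of_nonneg hr.le]; exact pi_pos.ne),
      cpow_def_of_ne_zero hr', ← Complex.exp_neg] at this
    rw [mul_comm (Complex.Gamma s), show -s * Complex.log r = -(Complex.log r * s) by ring, ← this]
    congr 1; ext t; congr 2; ring
  have htend : Filter.Tendsto (fun n : ℕ => (((1 + 1 / ((n : ℝ) + 1) : ℝ)) : ℂ)) Filter.atTop
      (nhdsWithin 1 {1}ᶜ) := by
    refine tendsto_nhdsWithin_iff.mpr ⟨?_, Filter.Eventually.of_forall fun n => ?_⟩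
    · have := (tendsto_one_div_add_atTop_nhds_zero_nat (𝕜 := ℝ)).const_add 1
      rw [add_zero] at this
      exact_mod_cast (Complex.continuous_ofReal.tendsto _).comp this
    · have : (0:ℝ) < 1 / ((n : ℝ) + 1) := by positivity
      intro h
      have h' : (1 + 1 / ((n : ℝ) + 1) : ℝ) = 1 := by
        have h := mem_singleton_iff.mp h
        exact_mod_cast h
      linarith
  exact htend.frequently (Filter.Frequently.of_forall fun n => hreal _ (by positivity))

lemma aux_re (ε : ℝ) (hε0 : 0 < ε) (hεπ : ε < π / 2) (z : ℂ) (h : |z.arg| ≤ π / 2 - ε) :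
    Real.sin ε * ‖z‖ ≤ z.re := by
  rw [← Complex.norm_mul_cos_arg z, mul_comm]
  gcongr
  rw [← Real.cos_pi_div_two_sub, ← Real.cos_abs z.arg]
  exact Real.cos_le_cos_of_nonneg_of_le_pi (abs_nonneg _) (by linarith) h

theorem stmt_2 (ε : ℝ) (hε0 : 0 < ε) (hεπ : ε < π / 2) (k : ℕ) (hk : 1 ≤ k)
    (a : ℕ → ℂ) (ha : ∀ n, a n ≠ 0) (harg : ∀ n, |(a n).arg| ≤ π / 2 - ε)
    (hsum : Summable fun n => ‖a n‖⁻¹ ^ k) :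
    (∀ t : ℝ, 0 < t → Summable fun n => ‖Complex.exp (-(t : ℂ) * a n)‖) ∧
    ∀ s : ℂ, (k : ℝ) < s.re →
      IntegrableOn
        (fun t : ℝ => (t : ℂ) ^ (s - 1) * ∑' n, Complex.exp (-(t : ℂ) * a n))
        (Ioi (0 : ℝ)) ∧
      Complex.Gamma s * ∑' n, Complex.exp (-s * Complex.log (a n)) =
        ∫ t in Ioi (0 : ℝ), (t : ℂ) ^ (s - 1) * ∑' n, Complex.exp (-(t : ℂ) * a n) := by
  have hc : 0 < Real.sin ε := Real.sin_pos_of_pos_of_lt_pi hε0 (by linarith [Real.pi_pos])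
  have hre : ∀ n, Real.sin ε * ‖a n‖ ≤ (a n).re := fun n => aux_re ε hε0 hεπ _ (harg n)
  have hn : ∀ n, 0 < ‖a n‖ := fun n => norm_pos_iff.mpr (ha n)
  have hpos : ∀ n, 0 < (a n).re := fun n => lt_of_lt_of_le (mul_pos hc (hn n)) (hre n)
  have hS : ∀ t : ℝ, 0 < t → Summable fun n => ‖Complex.exp (-(t : ℂ) * a n)‖ := by
    intro t ht
    refine Summable.of_nonneg_of_le (fun n => norm_nonneg _) (fun n => ?_)
      (hsum.mul_left ((k.factorial : ℝ) * ((t * Real.sin ε)⁻¹) ^ k))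
    rw [Complex.norm_exp]
    have h1 : (-(t : ℂ) * a n).re = -(t * (a n).re) := by simp
    rw [h1]
    set x := t * Real.sin ε * ‖a n‖ with hx
    have hx0 : 0 < x := by have := hn n; positivity
    have h2 : x ≤ t * (a n).re := by
      rw [hx, mul_assoc]; exact mul_le_mul_of_nonneg_left (hre n) ht.le
    have h3 : x ^ k / k.factorial ≤ Real.exp x := Real.pow_div_factorial_le_exp x hx0.le k
    calc Real.exp (-(t * (a n).re)) ≤ Real.exp (-x) := by gcongr
      _ = (Real.exp x)⁻¹ := Real.exp_neg x
      _ ≤ (x ^ k / k.factorial)⁻¹ := by gcongr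
      _ = _ := by rw [inv_div, hx, mul_pow _ ‖a n‖, inv_pow, inv_pow, div_eq_mul_inv, mul_inv, mul_assoc]
  refine ⟨hS, fun s hs => ?_⟩
  have hs0 : 0 < s.re := lt_of_le_of_lt (by positivity) hs
  let F : ℕ → ℝ → ℂ := fun n t => (t : ℂ) ^ (s - 1) * Complex.exp (-(t : ℂ) * a n)
  have hFi : ∀ n, Integrable (F n) (volume.restrict (Ioi 0)) := fun n => aux_cint hs0 (hpos n)
  have hFn : ∀ n, ∫ t in Ioi (0 : ℝ), ‖F n t‖ = (1 / (a n).re) ^ s.re * Real.Gamma s.re := by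
    intro n
    rw [← Real.integral_rpow_mul_exp_neg_mul_Ioi hs0 (hpos n)]
    exact setIntegral_congr_fun measurableSet_Ioi fun t ht => aux_norm s (a n) ht
  have hG := Real.Gamma_pos_of_pos hs0
  have hFs : Summable fun n => ∫ t in Ioi (0 : ℝ), ‖F n t‖ := by
    simp_rw [hFn]
    refine Summable.mul_right _ ?_
    refine Summable.of_norm_bounded_eventually_nat
      (hsum.mul_left ((Real.sin ε)⁻¹ ^ s.re)) ?_
    have hlt := hsum.tendsto_atTop_zero.eventually_lt_const (zero_lt_one)
    filter_upwards [hlt] with n hlt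
    have hn' := hn n
    have hp := hpos n
    have h1 : ‖a n‖⁻¹ ≤ 1 := by
      by_contra! h
      exact absurd hlt (not_lt.mpr (one_le_pow₀ h.le))
    rw [Real.norm_of_nonneg (by positivity)]
    calc (1 / (a n).re) ^ s.re ≤ ((Real.sin ε)⁻¹ * ‖a n‖⁻¹) ^ s.re := by
          refine Real.rpow_le_rpow (by positivity) ?_ hs0.le
          rw [← mul_inv, one_div]
          exact inv_anti₀ (by positivity) (hre n)
      _ = (Real.sin ε)⁻¹ ^ s.re * ‖a n‖⁻¹ ^ s.re := Real.mul_rpow (by positivity) (by positivity)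
      _ ≤ _ := by
          gcongr
          rw [← Real.rpow_natCast]
          exact Real.rpow_le_rpow_of_exponent_ge (by positivity) h1 hs.le
  have hF_eq : (fun t : ℝ => (t : ℂ) ^ (s - 1) * ∑' n, Complex.exp (-(t : ℂ) * a n)) =
      fun t => ∑' n, F n t := by
    ext t; rw [← tsum_mul_left]
  rw [hF_eq]
  have hsm : ∀ t : ℝ, 0 < t → Summable fun n => ‖F n t‖ := by
    intro t ht
    simp only [F, norm_mul]
    exact (hS t ht).mul_left _
  constructor
  · have hnsum := hasSum_integral_of_summable_integral_norm (μ := volume.restrict (Ioi (0:ℝ)))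
      (F := fun n t => ‖F n t‖) (fun n => (hFi n).norm) (by simpa using hFs)
    have hgi : Integrable (fun t => ∑' n, ‖F n t‖) (volume.restrict (Ioi (0:ℝ))) := by
      refine .of_integral_ne_zero ?_
      rw [← hnsum.tsum_eq]
      refine (hFs.tsum_pos (fun n => integral_nonneg fun t => norm_nonneg _) 0 ?_).ne'
      rw [hFn]
      have := hpos 0
      positivity
    refine hgi.mono' ?_ ?_
    · refine aestronglyMeasurable_of_tendsto_ae Filter.atTop
        (f := fun N t => ∑ n ∈ Finset.range N, F n t) (fun N => ?_) ?_
      · exact Finset.aestronglyMeasurable_fun_sum _ fun n _ => (hFi n).1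
      · refine (ae_restrict_iff' measurableSet_Ioi).mpr (ae_of_all _ fun t ht => ?_)
        exact (hsm t ht).of_norm.hasSum.tendsto_sum_nat
    · refine (ae_restrict_iff' measurableSet_Ioi).mpr (ae_of_all _ fun t ht => ?_)
      exact norm_tsum_le_tsum_norm (hsm t ht)
  · have := (hasSum_integral_of_summable_integral_norm hFi hFs).tsum_eq
    rw [← this, ← tsum_mul_left]
    exact tsum_congr fun n => (aux_mellin hs0 (hpos n)).symm
end

section
/- Let (a_n)_{n∈ℕ} be a sequence of nonzero complex numbers, k a natural number such that ∑_n a_n^{−s} converges absolutely for every s with Re(s) > k, and let s₀ ∈ ℂ with Re(s₀) > 0 be such that for some ε′ > 0 one has |Im(s₀·Log a_n)| ≤ π − ε′ for all n (so that Log(a_n^{s₀}) = s₀·Log a_n for all n). Suppose F, G : ℂ → ℂ are meromorphic on all of ℂ and holomorphic at 0 with F(s) = ∑_n a_n^{−s} for Re(s) > k and G(s) = ∑_n (a_n^{s₀})^{−s} for Re(s) > k/Re(s₀). Then G(s) = F(s₀·s) wherever both sides are defined, and consequently exp(−G′(0)) = exp(−s₀·F′(0)); in other words, the regularized product of (a_n^{s₀})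 is the s₀-th power of the regularized product of (a_n). -/
open Complex Real Set

/-- Power rule for regularized products: let `s₀` with `Re s₀ > 0` be such that
`|Im (s₀ * Log (a n))| ≤ π - ε'` for all `n` (so `Log ((a n) ^ s₀) = s₀ * Log (a n)`).
If `F` and `G` are meromorphic on `ℂ`, holomorphic at `0`, with `F s = ∑ (a n) ^ (-s)`
for `Re s > k` and `G s = ∑ ((a n) ^ s₀) ^ (-s)` for `Re s > k / Re s₀`, then
`G s = F (s₀ * s)` wherever both sides are defined, and
`exp (-G' 0) = exp (-s₀ * F' 0)`. Here `a ^ (-s) = exp (-s * Log a)` and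
`(a n) ^ s₀ = exp (s₀ * Log (a n))`. -/
theorem stmt_7 (a : ℕ → ℂ) (ha : ∀ n, a n ≠ 0) (k : ℕ)
    (hsum : ∀ s : ℂ, (k : ℝ) < s.re →
      Summable fun n => ‖Complex.exp (-s * Complex.log (a n))‖)
    (s₀ : ℂ) (hs₀ : 0 < s₀.re) (ε' : ℝ) (hε' : 0 < ε')
    (harg : ∀ n, |(s₀ * Complex.log (a n)).im| ≤ π - ε')
    (F G : ℂ → ℂ)
    (hF : MeromorphicOn F Set.univ) (hF0 : AnalyticAt ℂ F 0)
    (hG : MeromorphicOn G Set.univ) (hG0 : AnalyticAt ℂ G 0)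
    (hFeq : ∀ s : ℂ, (k : ℝ) < s.re →
      F s = ∑' n : ℕ, Complex.exp (-s * Complex.log (a n)))
    (hGeq : ∀ s : ℂ, (k : ℝ) / s₀.re < s.re →
      G s = ∑' n : ℕ,
        Complex.exp (-s * Complex.log (Complex.exp (s₀ * Complex.log (a n))))) :
    (∀ s : ℂ, AnalyticAt ℂ G s → AnalyticAt ℂ F (s₀ * s) → G s = F (s₀ * s)) ∧
    Complex.exp (-deriv G 0) = Complex.exp (-s₀ * deriv F 0) := by
  set H : ℂ → ℂ := fun s => G s - F (s₀ * s) with hH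
  have hlog : ∀ n, Complex.log (Complex.exp (s₀ * Complex.log (a n)))
      = s₀ * Complex.log (a n) := by
    intro n
    have h := abs_le.1 (harg n)
    exact Complex.log_exp (by linarith [h.1]) (by linarith [h.2])
  have hmer : Meromorphic H := by
    intro s
    have h1 : MeromorphicAt (F ∘ fun s => s₀ * s) s :=
      (hF (s₀ * s) (Set.mem_univ _)).comp_analyticAt (g := fun s => s₀ * s) (by fun_prop)
    exact (hG s (Set.mem_univ _)).sub h1
  have hzero : ∀ s : ℂ, (k : ℝ) / s₀.re < s.re → (k : ℝ) < (s₀ * s).re → H s = 0 := by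
    intro s h1 h2
    simp only [hH, hGeq s h1, hFeq _ h2, hlog]
    rw [sub_eq_zero]
    refine tsum_congr fun n => ?_
    congr 1
    ring
  have htop : ∃ u, meromorphicOrderAt H u = ⊤ := by
    refine ⟨(((k : ℝ) / s₀.re + 1 : ℝ) : ℂ), meromorphicOrderAt_eq_top_iff.2 ?_⟩
    apply Filter.Eventually.filter_mono nhdsWithin_le_nhds
    have c1 : Continuous fun s : ℂ => s.re := Complex.continuous_re
    have c2 : Continuous fun s : ℂ => (s₀ * s).re :=
      Complex.continuous_re.comp (continuous_const.mul continuous_id)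
    have e1 := (isOpen_lt continuous_const c1).mem_nhds
      (show (k : ℝ) / s₀.re < (((((k : ℝ) / s₀.re + 1 : ℝ)) : ℂ)).re by
        rw [Complex.ofReal_re]; linarith)
    have e2 := (isOpen_lt continuous_const c2).mem_nhds
      (show (k : ℝ) < (s₀ * ((((k : ℝ) / s₀.re + 1 : ℝ)) : ℂ)).re by
        rw [Complex.re_mul_ofReal, mul_add, mul_div_cancel₀ _ hs₀.ne']; linarith)
    filter_upwards [e1, e2] with s h1 h2 using hzero s h1 h2
  have hall : ∀ u, meromorphicOrderAt H u = ⊤ := by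
    intro u
    by_contra hu
    obtain ⟨v, hv⟩ := htop
    exact hmer.exists_meromorphicOrderAt_ne_top_iff_forall.1 ⟨u, hu⟩ v hv
  have hev : ∀ s : ℂ, AnalyticAt ℂ G s → AnalyticAt ℂ F (s₀ * s) →
      G =ᶠ[nhds s] fun s => F (s₀ * s) := by
    intro s h1 h2
    have h3 : AnalyticAt ℂ (fun s => F (s₀ * s)) s :=
      AnalyticAt.comp' (f := fun s => s₀ * s) h2 (by fun_prop)
    rw [← h1.continuousAt.eventuallyEq_nhds_iff_eventuallyEq_nhdsNE h3.continuousAt]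
    filter_upwards [meromorphicOrderAt_eq_top_iff.1 (hall s)] with z hz
    exact sub_eq_zero.1 hz
  refine ⟨fun s h1 h2 => (hev s h1 h2).eq_of_nhds, ?_⟩
  have hd := (hev 0 hG0 (by simpa using hF0)).deriv_eq
  rw [hd, deriv_comp_mul_left]
  simp
end

section
/- Let (a_n)_{n∈ℕ} be a sequence of nonzero complex numbers with Re(a_n) ≥ 0 for all n and ∑_n |a_n|^{−k} < ∞ for some natural number k. Fix s ∈ ℂ with Re(s) > k. Then for every λ ∈ ℂ with Re(λ) > 0 the series ∑_n (a_n + λ)^{−s} and ∑_n (a_n + λ)^{−s−1} converge absolutely, and the function λ ↦ ∑_n (a_n + λ)^{−s} is complex differentiable on {Re(λ) > 0} with derivative at λ equal to −s · ∑_n (a_n + λ)^{−s−1}. -/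
open Complex Real Set

lemma aux_bound (k : ℕ) (t : ℂ) (ht : (k : ℝ) < t.re) (d M : ℝ) (hd : 0 < d) (hM : 0 ≤ M) :
    ∃ K : ℝ, ∀ a m : ℂ, a ≠ 0 → 0 ≤ a.re → d ≤ m.re → ‖m‖ ≤ M →
      ‖Complex.exp (-t * Complex.log (a + m))‖ ≤ K * ‖a‖⁻¹ ^ k := by
  refine ⟨Real.exp (|t.im| * π) * (d ^ (-(t.re - k)) * (1 + M / d) ^ k), ?_⟩
  intro a m ha hare hm hmM
  have hz : d ≤ ‖a + m‖ := by
    have := Complex.re_le_norm (a + m)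
    simp only [Complex.add_re] at this
    linarith
  have hz0 : 0 < ‖a + m‖ := lt_of_lt_of_le hd hz
  have hna : 0 < ‖a‖ := norm_pos_iff.mpr ha
  have haz : ‖a‖ ≤ (1 + M / d) * ‖a + m‖ := by
    have h1 : ‖a‖ ≤ ‖a + m‖ + ‖m‖ := by
      simpa using norm_sub_le (a + m) m
    have h2 : M ≤ M / d * ‖a + m‖ := by
      rw [div_mul_eq_mul_div, le_div_iff₀ hd]
      exact mul_le_mul_of_nonneg_left hz hM
    linarith
  have hinv : ‖a + m‖⁻¹ ≤ (1 + M / d) * ‖a‖⁻¹ := by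
    rw [inv_le_iff_one_le_mul₀ hz0, mul_assoc, mul_comm ‖a‖⁻¹, ← mul_assoc,
      ← div_eq_mul_inv, one_le_div hna]
    exact haz
  have hre : (-t * Complex.log (a + m)).re
      = t.im * Complex.arg (a + m) + Real.log ‖a + m‖ * (-(t.re - k) + -(k : ℝ)) := by
    simp [Complex.mul_re, Complex.log_re, Complex.log_im]
    ring
  rw [Complex.norm_exp, hre, Real.exp_add, ← Real.rpow_def_of_pos hz0, Real.rpow_add hz0]
  have e1 : Real.exp (t.im * Complex.arg (a + m)) ≤ Real.exp (|t.im| * π) := by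
    apply Real.exp_le_exp.mpr
    refine (le_abs_self _).trans ?_
    rw [abs_mul]
    exact mul_le_mul_of_nonneg_left (Complex.abs_arg_le_pi _) (abs_nonneg _)
  have e2 : ‖a + m‖ ^ (-(t.re - k)) ≤ d ^ (-(t.re - k)) :=
    Real.rpow_le_rpow_of_nonpos hd hz (by linarith)
  have e3 : ‖a + m‖ ^ (-(k : ℝ)) ≤ (1 + M / d) ^ k * ‖a‖⁻¹ ^ k := by
    rw [Real.rpow_neg hz0.le, Real.rpow_natCast, ← inv_pow, ← mul_pow]
    exact pow_le_pow_left₀ (by positivity) hinv k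
  calc _ ≤ Real.exp (|t.im| * π) * (d ^ (-(t.re - k)) * ((1 + M / d) ^ k * ‖a‖⁻¹ ^ k)) := by
        gcongr
    _ = _ := by ring

/-- For a sequence of nonzero complex numbers with `Re (a n) ≥ 0` and `∑ |a n|⁻¹ ^ k < ∞`,
and a fixed `s` with `Re s > k`, the series `∑ (a n + λ) ^ (-s)` and `∑ (a n + λ) ^ (-s-1)`
converge absolutely for `Re λ > 0`, and `λ ↦ ∑ (a n + λ) ^ (-s)` is complex differentiable
there with derivative `-s * ∑ (a n + λ) ^ (-s-1)`. Here `a ^ (-s) = exp (-s * Log a)`. -/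
theorem stmt_8 (a : ℕ → ℂ) (ha : ∀ n, a n ≠ 0) (hre : ∀ n, 0 ≤ (a n).re)
    (k : ℕ) (hsum : Summable fun n => ‖a n‖⁻¹ ^ k)
    (s : ℂ) (hs : (k : ℝ) < s.re) :
    ∀ l : ℂ, 0 < l.re →
      (Summable fun n => ‖Complex.exp (-s * Complex.log (a n + l))‖) ∧
      (Summable fun n => ‖Complex.exp (-(s + 1) * Complex.log (a n + l))‖) ∧
      HasDerivAt (fun μ : ℂ => ∑' n, Complex.exp (-s * Complex.log (a n + μ)))
        (-s * ∑' n, Complex.exp (-(s + 1) * Complex.log (a n + l))) l := by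
  intro l hl
  have hd : 0 < l.re / 2 := by linarith
  have hM : 0 ≤ ‖l‖ + l.re / 2 := by positivity
  have hs1 : (k : ℝ) < (s + 1).re := by simp; linarith
  obtain ⟨K, hK⟩ := aux_bound k s hs _ _ hd hM
  obtain ⟨K', hK'⟩ := aux_bound k (s + 1) hs1 _ _ hd hM
  have S1 : Summable fun n => ‖Complex.exp (-s * Complex.log (a n + l))‖ :=
    Summable.of_nonneg_of_le (fun _ => norm_nonneg _)
      (fun n => hK (a n) l (ha n) (hre n) (by linarith) (by linarith)) (hsum.mul_left K)
  have S2 : Summable fun n => ‖Complex.exp (-(s + 1) * Complex.log (a n + l))‖ :=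
    Summable.of_nonneg_of_le (fun _ => norm_nonneg _)
      (fun n => hK' (a n) l (ha n) (hre n) (by linarith) (by linarith)) (hsum.mul_left K')
  refine ⟨S1, S2, ?_⟩
  rw [← tsum_mul_left]
  have hball : ∀ y ∈ Metric.ball l (l.re / 2), l.re / 2 ≤ y.re ∧ ‖y‖ ≤ ‖l‖ + l.re / 2 := by
    intro y hy
    rw [mem_ball_iff_norm] at hy
    have h1 := (abs_le.mp (Complex.abs_re_le_norm (y - l))).1
    have h2 := norm_le_norm_add_norm_sub' y l
    rw [Complex.sub_re] at h1
    constructor <;> linarith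
  refine hasDerivAt_tsum_of_isPreconnected
    (g := fun n μ => Complex.exp (-s * Complex.log (a n + μ)))
    (g' := fun n μ => -s * Complex.exp (-(s + 1) * Complex.log (a n + μ)))
    (u := fun n => ‖s‖ * (K' * ‖a n‖⁻¹ ^ k)) (t := Metric.ball l (l.re / 2)) (y₀ := l)
    ((hsum.mul_left K').mul_left _) Metric.isOpen_ball
    (convex_ball _ _).isPreconnected ?_ ?_ (Metric.mem_ball_self hd) S1.of_norm
    (Metric.mem_ball_self hd)
  · intro n y hy
    have hy1 := (hball y hy).1
    have hpos : 0 < (a n + y).re := by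
      have := hre n
      simp only [Complex.add_re]; linarith
    have hne : a n + y ≠ 0 := by
      intro h; rw [h] at hpos; simp at hpos
    have h := ((((hasDerivAt_id y).const_add (a n)).clog (Or.inl hpos)).const_mul (-s)).cexp
    convert! h using 1
    simp only [id]
    rw [show -(s + 1) * Complex.log (a n + y)
      = -s * Complex.log (a n + y) - Complex.log (a n + y) by ring, Complex.exp_sub,
      Complex.exp_log hne]
    ring
  · intro n y hy
    rw [norm_mul, norm_neg]
    exact mul_le_mul_of_nonneg_left
      (hK' (a n) y (ha n) (hre n) (hball y hy).1 (hball y hy).2) (norm_nonneg _)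
end

section
/- Let (a_n)_{n∈ℕ} be a sequence of positive real numbers such that ∑_n a_n^{ε−1} < ∞ for some ε ∈ (0,1), and let k be a natural number such that ∑_n a_n^{−k} < ∞. Suppose F, G : ℂ → ℂ are meromorphic on all of ℂ and holomorphic at 0 with F(s) = ∑_n a_n^{−s} and G(s) = ∑_n (a_n + 1)^{−s} for all s with Re(s) > k. Then the infinite product ∏_n (1 + a_n^{−1}) converges and ∏_n (1 + a_n^{−1}) = exp(−G′(0)) / exp(−F′(0)); in other words, the Fredholm determinant det_Fr(1 + A^{−1}) equals the quotient det(A+1)/det(A) of zeta-regularized determinants. -/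
open Complex Real Set

/-- Individual term bound via the mean value inequality. -/
lemma aux_term_bound (x : ℝ) (hx : 0 < x) (s : ℂ) (hs : -1 ≤ s.re) :
    ‖Complex.exp (-s * (Real.log (x + 1) : ℂ)) - Complex.exp (-s * (Real.log x : ℂ))‖
      ≤ ‖s‖ * x ^ (-s.re - 1) := by
  have key := Convex.norm_image_sub_le_of_norm_hasDerivWithin_le (𝕜 := ℝ) (s := Set.Icc x (x + 1))
    (f := fun y : ℝ => Complex.exp (-s * (Real.log y : ℂ)))
    (f' := fun y : ℝ => Complex.exp (-s * (Real.log y : ℂ)) * (-s * ((y⁻¹ : ℝ) : ℂ)))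
    (C := ‖s‖ * x ^ (-s.re - 1)) (x := x) (y := x + 1) ?_ ?_ (convex_Icc _ _)
    ⟨le_rfl, by linarith⟩ ⟨by linarith, le_rfl⟩
  · simpa using key
  · intro y hy
    have hy0 : 0 < y := lt_of_lt_of_le hx hy.1
    have h1 := (Real.hasDerivAt_log hy0.ne').ofReal_comp
    exact ((h1.const_mul (-s)).cexp).hasDerivWithinAt
  · intro y hy
    have hy0 : 0 < y := lt_of_lt_of_le hx hy.1
    have h2 : ‖Complex.exp (-s * (Real.log y : ℂ))‖ = y ^ (-s.re) := by
      rw [Complex.norm_exp, Real.rpow_def_of_pos hy0]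
      congr 1
      simp [mul_comm]
    have h3 : y ^ (-s.re - 1) ≤ x ^ (-s.re - 1) :=
      Real.rpow_le_rpow_of_nonpos hx hy.1 (by linarith)
    have h4 : y ^ (-s.re - 1) = y ^ (-s.re) * y⁻¹ := by
      rw [Real.rpow_sub hy0, Real.rpow_one, div_eq_mul_inv]
    rw [norm_mul, h2, norm_mul, norm_neg, Complex.norm_real, Real.norm_of_nonneg (by positivity)]
    calc y ^ (-s.re) * (‖s‖ * y⁻¹) = ‖s‖ * y ^ (-s.re - 1) := by rw [h4]; ring
      _ ≤ _ := by gcongr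

lemma aux_norm_exp (x : ℝ) (hx : 0 < x) (s : ℂ) :
    ‖Complex.exp (-s * (Real.log x : ℂ))‖ = x ^ (-s.re) := by
  rw [Complex.norm_exp, Real.rpow_def_of_pos hx]
  congr 1
  simp [mul_comm]

lemma aux_bound_s14 (a : ℕ → ℝ) (hapos : ∀ n, 0 < a n)
    (ε : ℝ) (hε1 : ε < 1) (hsumε : Summable fun n => a n ^ (ε - 1)) :
    ∃ D : ℝ, 1 ≤ D ∧ ∀ n, (a n)⁻¹ ≤ D := by
  have hnn : ∀ n, 0 ≤ a n ^ (ε - 1) := fun n => Real.rpow_nonneg (hapos n).le _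
  refine ⟨max 1 ((∑' n, a n ^ (ε - 1)) ^ (1 / (1 - ε))), le_max_left _ _, fun n => ?_⟩
  refine le_trans ?_ (le_max_right _ _)
  have h1 : a n ^ (ε - 1) ≤ ∑' n, a n ^ (ε - 1) := hsumε.le_tsum n (fun j _ => hnn j)
  have h2 : (a n)⁻¹ = (a n ^ (ε - 1)) ^ (1 / (1 - ε)) := by
    rw [← Real.rpow_mul (hapos n).le, ← Real.rpow_neg_one]
    congr 1
    have : 1 - ε ≠ 0 := by linarith
    field_simp
    ring
  rw [h2]
  exact Real.rpow_le_rpow (hnn n) h1 (by apply div_nonneg <;> linarith)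

lemma aux_pow (x D p t T : ℝ) (hx : 0 < x) (hD : 1 ≤ D) (hxD : x⁻¹ ≤ D) (ht : 0 ≤ t) (htT : t ≤ T) :
    x ^ (p - t) ≤ D ^ T * x ^ p := by
  have h1 : x ^ (p - t) = x⁻¹ ^ t * x ^ p := by
    rw [Real.rpow_sub hx, Real.inv_rpow hx.le]; field_simp
  rw [h1]
  have h2 : x⁻¹ ^ t ≤ D ^ T :=
    (Real.rpow_le_rpow (by positivity) hxD ht).trans (Real.rpow_le_rpow_of_exponent_le hD htT)
  gcongr

/-- Fredholm determinant versus zeta-regularized determinants: for positive reals `a n`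
with `∑ (a n)^(ε-1) < ∞` for some `ε ∈ (0,1)` and `∑ (a n)^(-k) < ∞`, if `F` and `G` are
meromorphic on `ℂ`, holomorphic at `0`, with `F s = ∑ (a n)^(-s)` and
`G s = ∑ (a n + 1)^(-s)` for `Re s > k`, then the product `∏ (1 + (a n)⁻¹)` converges and
equals `exp (-G' 0) / exp (-F' 0)`, i.e. `det_Fr (1 + A⁻¹) = det (A + 1) / det A`. -/
theorem stmt_14 (a : ℕ → ℝ) (hapos : ∀ n, 0 < a n)
    (ε : ℝ) (hε0 : 0 < ε) (hε1 : ε < 1) (hsumε : Summable fun n => a n ^ (ε - 1))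
    (k : ℕ) (hsumk : Summable fun n => a n ^ (-(k : ℝ)))
    (F G : ℂ → ℂ)
    (hF : MeromorphicOn F Set.univ) (hF0 : AnalyticAt ℂ F 0)
    (hG : MeromorphicOn G Set.univ) (hG0 : AnalyticAt ℂ G 0)
    (hFeq : ∀ s : ℂ, (k : ℝ) < s.re →
      F s = ∑' n : ℕ, Complex.exp (-s * (Real.log (a n) : ℂ)))
    (hGeq : ∀ s : ℂ, (k : ℝ) < s.re →
      G s = ∑' n : ℕ, Complex.exp (-s * (Real.log (a n + 1) : ℂ))) :
    (Multipliable fun n : ℕ => (1 + (a n)⁻¹ : ℝ)) ∧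
    ((∏' n : ℕ, (1 + (a n)⁻¹ : ℝ)) : ℂ) =
      Complex.exp (-deriv G 0) / Complex.exp (-deriv F 0) := by
  obtain ⟨D, hD1, hD⟩ := aux_bound_s14 a hapos ε hε1 hsumε
  have hsum1 : Summable fun n => (a n)⁻¹ := by
    refine Summable.of_nonneg_of_le (fun n => (inv_pos.2 (hapos n)).le) (fun n => ?_)
      (hsumε.mul_left (D ^ ε))
    have := aux_pow (a n) D (ε - 1) ε ε (hapos n) hD1 (hD n) hε0.le le_rfl
    rwa [show ε - 1 - ε = (-1 : ℝ) by ring, Real.rpow_neg_one] at this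
  refine ⟨Real.multipliable_one_add_of_summable hsum1, ?_⟩
  set h : ℕ → ℂ → ℂ := fun n s =>
    Complex.exp (-s * (Real.log (a n + 1) : ℂ)) - Complex.exp (-s * (Real.log (a n) : ℂ)) with hh
  set H : ℂ → ℂ := fun s => ∑' n, h n s with hHdef
  set U : Set ℂ := {s | -ε < s.re} with hUdef
  have hUo : IsOpen U := isOpen_lt continuous_const Complex.continuous_re
  have hdiff : ∀ n, Differentiable ℂ (h n) := fun n => by
    simp only [hh]; fun_prop
  have hbd : ∀ R : ℝ, ∀ n, ∀ s ∈ U ∩ Metric.ball 0 R,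
      ‖h n s‖ ≤ R * D ^ (R + 1) * a n ^ (ε - 1) := by
    intro R n s hs
    have hsU : -ε < s.re := hs.1
    have hsR : ‖s‖ < R := by simpa using hs.2
    have hre : s.re ≤ ‖s‖ := Complex.re_le_norm s
    have hR0 : 0 ≤ R := (norm_nonneg s).trans hsR.le
    refine (aux_term_bound (a n) (hapos n) s (by linarith)).trans ?_
    have := aux_pow (a n) D (ε - 1) (s.re + ε) (R + 1) (hapos n) hD1 (hD n)
      (by linarith) (by linarith)
    rw [show ε - 1 - (s.re + ε) = -s.re - 1 by ring] at this
    rw [mul_assoc]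
    have h0 : 0 ≤ a n ^ (-s.re - 1) := Real.rpow_nonneg (hapos n).le _
    gcongr
  have hopen : ∀ R : ℝ, IsOpen (U ∩ Metric.ball 0 R) := fun R => hUo.inter Metric.isOpen_ball
  have hsumR : ∀ R : ℝ, Summable fun n => R * D ^ (R + 1) * a n ^ (ε - 1) :=
    fun R => hsumε.mul_left _
  have hmem : ∀ s ∈ U, s ∈ U ∩ Metric.ball 0 (‖s‖ + 1) := fun s hs => ⟨hs, by simp⟩
  have hHan : ∀ s ∈ U, AnalyticAt ℂ H s := by
    intro s hs
    have hd : DifferentiableOn ℂ H (U ∩ Metric.ball 0 (‖s‖ + 1)) :=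
      differentiableOn_tsum_of_summable_norm (hsumR _) (fun n => (hdiff n).differentiableOn)
        (hopen _) (hbd _)
    exact hd.analyticAt ((hopen _).mem_nhds (hmem s hs))
  have h0U : (0 : ℂ) ∈ U := by simp [hUdef, hε0]
  have hder : HasSum (fun n => deriv (h n) 0) (deriv H 0) :=
    hasSum_deriv_of_summable_norm (hsumR _) (fun n => (hdiff n).differentiableOn)
        (hopen _) (hbd _) (hmem 0 h0U)
  -- the identity on the half plane of convergence
  have hid : ∀ s : ℂ, (k : ℝ) < s.re → G s - F s - H s = 0 := by
    intro s hs
    have hsU : s ∈ U := by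
      have : (0 : ℝ) ≤ k := Nat.cast_nonneg k
      show -ε < s.re
      linarith
    have hsF : Summable fun n => Complex.exp (-s * (Real.log (a n) : ℂ)) := by
      refine Summable.of_norm_bounded (hsumk.mul_left (D ^ (s.re - k))) (fun n => ?_)
      rw [aux_norm_exp _ (hapos n)]
      have := aux_pow (a n) D (-k) (s.re - k) (s.re - k) (hapos n) hD1 (hD n)
        (by linarith) le_rfl
      rwa [show -(k : ℝ) - (s.re - k) = -s.re by ring] at this
    have hsH : Summable fun n => h n s :=
      Summable.of_norm_bounded (hsumR _) (fun n => hbd _ n s (hmem s hsU))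
    rw [hFeq s hs, hGeq s hs]
    have : ∑' n, (h n s + Complex.exp (-s * (Real.log (a n) : ℂ)))
        = ∑' n, h n s + ∑' n, Complex.exp (-s * (Real.log (a n) : ℂ)) := hsH.tsum_add hsF
    simp only [hHdef]
    rw [← sub_eq_zero] at this
    rw [← this]
    simp only [hh, sub_add_cancel]
    ring
  have hmer : MeromorphicOn (G - F - H) U := fun s hs =>
    ((hG s (mem_univ _)).sub (hF s (mem_univ _))).sub (hHan s hs).meromorphicAt
  have hconn : IsPreconnected U := (convex_halfSpace_re_gt (-ε)).isPreconnected
  have hev : ∀ᶠ z in nhdsWithin (0 : ℂ) {0}ᶜ, (G - F - H) z = 0 := by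
    rw [← meromorphicOrderAt_eq_top_iff]
    by_contra hne
    have hk1 : ((k : ℂ) + 1) ∈ U := by
      have : (0 : ℝ) ≤ k := Nat.cast_nonneg k
      show -ε < ((k : ℂ) + 1).re
      simp; linarith
    refine hmer.meromorphicOrderAt_ne_top_of_isPreconnected hconn h0U hk1 hne ?_
    rw [meromorphicOrderAt_eq_top_iff]
    refine Filter.Eventually.filter_mono nhdsWithin_le_nhds ?_
    have : {s : ℂ | (k : ℝ) < s.re} ∈ nhds ((k : ℂ) + 1) :=
      (isOpen_lt continuous_const Complex.continuous_re).mem_nhds (by simp)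
    filter_upwards [this] with s hs using hid s hs
  have hev' : ∀ᶠ z in nhds (0 : ℂ), (G - F - H) z = 0 :=
    (((hG0.sub hF0).sub (hHan 0 h0U)).frequently_eq_iff_eventually_eq analyticAt_const).1
      hev.frequently
  have hd0 : deriv G 0 - deriv F 0 - deriv H 0 = 0 := by
    have h1 : deriv (G - F - H) 0 = 0 := by
      rw [Filter.EventuallyEq.deriv_eq (f := fun _ => (0 : ℂ)) hev']; simp
    refine Eq.trans ?_ h1
    exact ((hG0.differentiableAt.hasDerivAt.sub hF0.differentiableAt.hasDerivAt).sub
      (hHan 0 h0U).differentiableAt.hasDerivAt).deriv.symm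
  have hterm : ∀ n, Complex.exp (-deriv (h n) 0) = ((1 + (a n)⁻¹ : ℝ) : ℂ) := by
    intro n
    have e1 : ∀ c : ℂ, HasDerivAt (fun s : ℂ => Complex.exp (-s * c)) (-c) 0 := fun c => by
      have := ((hasDerivAt_id (0 : ℂ)).neg.mul_const c).cexp
      simpa using this
    have e2 : deriv (h n) 0 = -(Real.log (a n + 1) : ℂ) - -(Real.log (a n) : ℂ) :=
      ((e1 _).sub (e1 _)).deriv
    have hp := hapos n
    rw [e2, show -(-(Real.log (a n + 1) : ℂ) - -(Real.log (a n) : ℂ))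
      = ((Real.log (a n + 1) - Real.log (a n) : ℝ) : ℂ) by push_cast; ring,
      ← Real.log_div (by positivity) hp.ne', ← Complex.ofReal_exp, Real.exp_log (by positivity)]
    congr 1
    field_simp
  have hprod := hder.neg.cexp
  have hfun : (Complex.exp ∘ fun n => -deriv (h n) 0) = fun n => ((1 + (a n)⁻¹ : ℝ) : ℂ) :=
    funext hterm
  rw [hfun] at hprod
  rw [hprod.tprod_eq, ← Complex.exp_sub]
  congr 1
  linear_combination hd0
end

section
/- Let n be a natural number and for a function g : ℝ → ℂ write ‖g‖_m := sup_{x∈ℝ} (1 + x²)^m · |g(x)|. Let f : ℝ → ℂ be a smooth even function with ‖f‖_{n+1} < ∞, ‖f′‖_{n+1} < ∞ and ‖f″‖_{n+1} < ∞. Then for every δ > 0 there exists a smooth, even, compactly supported function φ : ℝ → ℂ such that the Fourier transform g := 𝓕φ (restricted to the real line) satisfies ‖f − g‖_n ≤ δ, i.e. sup_{x∈ℝ} (1 + x²)^n · |f(x) − (𝓕φ)(x)| ≤ δ. -/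
open Complex Real FourierTransform

open scoped ContDiff SchwartzMap

lemma aux_cutoff : ∃ χ : ℝ → ℂ, ContDiff ℝ ∞ χ ∧ (∀ x, χ (-x) = χ x) ∧ HasCompactSupport χ ∧
    (∀ x, |x| ≤ 1 → χ x = 1) ∧ (∀ x, ‖χ x - 1‖ ≤ 1) := by
  let b : ContDiffBump (0 : ℝ) := ⟨1, 2, one_pos, one_lt_two⟩
  refine ⟨fun x => (b x : ℂ), ?_, ?_, ?_, ?_, ?_⟩
  · exact Complex.ofRealCLM.contDiff.comp b.contDiff
  · intro x; simp [b.neg]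
  · exact b.hasCompactSupport.comp_left (g := Complex.ofReal) rfl
  · intro x hx
    have : b x = 1 := b.one_of_mem_closedBall (by simpa [b] using hx)
    simp [this]
  · intro x
    have h0 : 0 ≤ b x := b.nonneg
    have h1 : b x ≤ 1 := b.le_one
    rw [← Complex.ofReal_one, ← Complex.ofReal_sub, Complex.norm_real, Real.norm_eq_abs, abs_le]
    constructor <;> linarith

lemma aux_scale_cs {χ : ℝ → ℂ} (h : HasCompactSupport χ) {c : ℝ} (hc : c ≠ 0) (g : ℝ → ℂ) :
    HasCompactSupport (fun x => χ (c * x) * g x) := by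
  have : HasCompactSupport (fun x => χ (c * x)) :=
    h.comp_homeomorph (Homeomorph.mulLeft₀ c hc)
  exact this.mul_right

lemma aux_deriv_bd {χ : ℝ → ℂ} (h : ContDiff ℝ ∞ χ) (hc : HasCompactSupport χ) (i : ℕ) :
    ∃ C : ℝ, 0 ≤ C ∧ ∀ c : ℝ, |c| ≤ 1 → ∀ x,
      ‖iteratedDeriv i (fun x => χ (c * x) - 1) x‖ ≤ C := by
  let S := hc.toSchwartzMap h
  refine ⟨SchwartzMap.seminorm ℝ 0 i S + 1, by positivity, fun c hc1 x => ?_⟩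
  have hi : ContDiff ℝ i χ := h.of_le (mod_cast le_top)
  have h1 : ContDiff ℝ i (fun x => χ (c * x)) := hi.comp (by fun_prop)
  have h2 : iteratedDeriv i (fun x => χ (c * x) - 1) x
      = iteratedDeriv i (fun x => χ (c * x)) x - iteratedDeriv i (fun _ => (1 : ℂ)) x := by
    exact iteratedDeriv_sub (f := fun x => χ (c * x)) (g := fun _ => (1 : ℂ))
      h1.contDiffAt contDiff_const.contDiffAt
  rw [h2]
  refine (norm_sub_le _ _).trans (add_le_add ?_ ?_)
  · rw [iteratedDeriv_comp_const_smul hi]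
    have h3 := SchwartzMap.le_seminorm' ℝ 0 i S (c * x)
    have h3' : ‖iteratedDeriv i χ (c * x)‖ ≤ SchwartzMap.seminorm ℝ 0 i S := by
      rw [pow_zero, one_mul] at h3
      exact h3
    simp only [norm_smul, norm_pow, Real.norm_eq_abs]
    calc |c| ^ i * ‖iteratedDeriv i χ (c * x)‖ ≤ 1 * ‖iteratedDeriv i χ (c * x)‖ := by
          gcongr
          exact pow_le_one₀ (abs_nonneg _) hc1
      _ ≤ _ := by simpa using h3'
  · rw [iteratedDeriv_const]
    split_ifs <;> simp

lemma aux_tendsto {χ : ℝ → ℂ} (h : ContDiff ℝ ∞ χ) (hc : HasCompactSupport χ)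
    (h1 : ∀ x, |x| ≤ 1 → χ x = 1) (ψ : 𝓢(ℝ, ℂ)) (u : ℕ → 𝓢(ℝ, ℂ))
    (hu : ∀ j x, u j x = χ (((j : ℝ) + 1)⁻¹ * x) * ψ x) :
    Filter.Tendsto u Filter.atTop (nhds ψ) := by
  rw [(schwartz_withSeminorms ℝ ℝ ℂ).tendsto_nhds]
  rintro ⟨k, m⟩ ε hε
  choose C hC0 hC using fun i => aux_deriv_bd h hc i
  set K : ℝ := ∑ i ∈ Finset.range (m + 1),
    (m.choose i : ℝ) * C i * SchwartzMap.seminorm ℝ (k + 1) (m - i) ψ with hK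
  have hK0 : 0 ≤ K := Finset.sum_nonneg fun i _ => by
    have := hC0 i
    positivity
  have key : ∀ j : ℕ, SchwartzMap.seminorm ℝ k m (u j - ψ) ≤ K * ((j : ℝ) + 1)⁻¹ := by
    intro j
    set c : ℝ := ((j : ℝ) + 1)⁻¹ with hcdef
    have hcpos : 0 < c := by positivity
    have hcle : |c| ≤ 1 := by
      rw [abs_of_pos hcpos]
      exact inv_le_one_of_one_le₀ (by linarith [(Nat.cast_nonneg j : (0 : ℝ) ≤ j)])
    have hfun : ((u j - ψ : 𝓢(ℝ, ℂ)) : ℝ → ℂ) = fun x => (χ (c * x) - 1) * ψ x := by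
      funext x
      simp [hu, sub_mul, hcdef]
    refine SchwartzMap.seminorm_le_bound' ℝ k m _ (by positivity) fun x => ?_
    rw [hfun]
    by_cases hx : c * |x| < 1
    · have : (fun x => (χ (c * x) - 1) * ψ x) =ᶠ[nhds x] fun _ => 0 := by
        have ho : IsOpen {y : ℝ | c * |y| < 1} := isOpen_lt (by fun_prop) continuous_const
        filter_upwards [ho.mem_nhds hx] with y hy
        rw [h1 (c * y) (by rw [abs_mul, abs_of_pos hcpos]; exact le_of_lt hy)]
        simp
      rw [this.iteratedDeriv_eq]
      simp only [iteratedDeriv_const]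
      have : (0 : ℝ) ≤ K * c := by positivity
      split_ifs <;> simpa using this
    · push Not at hx
      have hl : ContDiff ℝ ∞ (fun x => χ (c * x) - 1) :=
        (h.comp (by fun_prop)).sub contDiff_const
      have hle := norm_iteratedFDeriv_mul_le (𝕜 := ℝ) (N := ∞) hl (ψ.smooth ⊤) x (n := m)
        (mod_cast le_top)
      simp only [norm_iteratedFDeriv_eq_norm_iteratedDeriv] at hle
      calc |x| ^ k * ‖iteratedDeriv m (fun x => (χ (c * x) - 1) * ψ x) x‖
          ≤ |x| ^ k * ∑ i ∈ Finset.range (m + 1),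
            (m.choose i : ℝ) * ‖iteratedDeriv i (fun x => χ (c * x) - 1) x‖
              * ‖iteratedDeriv (m - i) ψ x‖ := by gcongr
        _ ≤ (c * |x|) * (|x| ^ k * ∑ i ∈ Finset.range (m + 1),
            (m.choose i : ℝ) * ‖iteratedDeriv i (fun x => χ (c * x) - 1) x‖
              * ‖iteratedDeriv (m - i) ψ x‖) := le_mul_of_one_le_left (by positivity) hx
        _ = (∑ i ∈ Finset.range (m + 1),
            (m.choose i : ℝ) * ‖iteratedDeriv i (fun x => χ (c * x) - 1) x‖
              * (|x| ^ (k + 1) * ‖iteratedDeriv (m - i) ψ x‖)) * c := by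
            rw [Finset.mul_sum, Finset.mul_sum, Finset.sum_mul]
            refine Finset.sum_congr rfl fun i _ => ?_
            ring
        _ ≤ K * c := by
            rw [hK]
            gcongr with i _
            · exact mul_nonneg (Nat.cast_nonneg _) (hC0 i)
            · exact hC i c hcle x
            · exact SchwartzMap.le_seminorm' ℝ (k + 1) (m - i) ψ x
  have hlim : Filter.Tendsto (fun j : ℕ => K * ((j : ℝ) + 1)⁻¹) Filter.atTop (nhds 0) := by
    have := (tendsto_one_div_add_atTop_nhds_zero_nat (𝕜 := ℝ)).const_mul K
    simpa [one_div] using this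
  filter_upwards [hlim.eventually_lt_const hε] with j hj
  exact (key j).trans_lt hj

/-- Density of the Paley–Wiener space in `F_ev^{n+1}` for the norm `‖·‖_n`: if `f : ℝ → ℂ`
is smooth, even, and `f`, `f'`, `f''` satisfy `sup_x (1+x²)^(n+1) |g(x)| < ∞`, then for
every `δ > 0` there is a smooth, even, compactly supported `φ` with
`sup_x (1+x²)^n |f x - 𝓕 φ x| ≤ δ`. -/
theorem stmt_16 (n : ℕ) (f : ℝ → ℂ)
    (hf : ContDiff ℝ (⊤ : ℕ∞) f) (heven : ∀ x : ℝ, f (-x) = f x)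
    (hbd : ∃ M : ℝ, ∀ x : ℝ, (1 + x ^ 2) ^ (n + 1) * ‖f x‖ ≤ M)
    (hbd' : ∃ M : ℝ, ∀ x : ℝ, (1 + x ^ 2) ^ (n + 1) * ‖deriv f x‖ ≤ M)
    (hbd'' : ∃ M : ℝ, ∀ x : ℝ, (1 + x ^ 2) ^ (n + 1) * ‖deriv (deriv f) x‖ ≤ M) :
    ∀ δ : ℝ, 0 < δ →
      ∃ φ : ℝ → ℂ, ContDiff ℝ (⊤ : ℕ∞) φ ∧ (∀ x : ℝ, φ (-x) = φ x) ∧ HasCompactSupport φ ∧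
        ∀ x : ℝ, (1 + x ^ 2) ^ n * ‖f x - 𝓕 φ x‖ ≤ δ := by
  intro δ hδ
  obtain ⟨M, hM⟩ := hbd
  obtain ⟨χ, hχ, hχe, hχc, hχ1, hχb⟩ := aux_cutoff
  have hM0 : 0 ≤ M := le_trans (by positivity) (hM 0)
  -- first truncation
  obtain ⟨c, hc0, hc⟩ : ∃ c : ℝ, 0 < c ∧ M * c ^ 2 ≤ δ / 2 := by
    have ht : Filter.Tendsto (fun c : ℝ => M * c ^ 2) (nhdsWithin 0 (Set.Ioi 0)) (nhds 0) := by
      have : Continuous (fun c : ℝ => M * c ^ 2) := by fun_prop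
      simpa using (this.tendsto 0).mono_left nhdsWithin_le_nhds
    obtain ⟨c, h1, h2⟩ := ((ht.eventually_lt_const (half_pos hδ)).and
      self_mem_nhdsWithin).exists
    exact ⟨c, h2, h1.le⟩
  have hFs : ContDiff ℝ ∞ (fun x => χ (c * x) * f x) := (hχ.comp (by fun_prop)).mul hf
  have hFc := aux_scale_cs hχc hc0.ne' f
  let F : 𝓢(ℝ, ℂ) := hFc.toSchwartzMap hFs
  have hF : ∀ x, F x = χ (c * x) * f x := fun x => rfl
  have hFe : ∀ x, F (-x) = F x := fun x => by simp [hF, heven, hχe]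
  have hfF : ∀ x, (1 + x ^ 2) ^ n * ‖f x - F x‖ ≤ δ / 2 := by
    intro x
    have e : f x - F x = -((χ (c * x) - 1) * f x) := by rw [hF]; ring
    rw [e, norm_neg, norm_mul]
    by_cases hx : c * |x| ≤ 1
    · rw [hχ1 (c * x) (by rwa [abs_mul, abs_of_pos hc0])]
      simp only [sub_self, norm_zero, zero_mul, mul_zero]
      exact (half_pos hδ).le
    · push Not at hx
      have hx2 : 1 ≤ c ^ 2 * (1 + x ^ 2) := by
        have : 1 ≤ (c * |x|) ^ 2 := one_le_pow₀ hx.le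
        rw [mul_pow, sq_abs] at this
        nlinarith [sq_nonneg c]
      calc (1 + x ^ 2) ^ n * (‖χ (c * x) - 1‖ * ‖f x‖) ≤ (1 + x ^ 2) ^ n * (1 * ‖f x‖) := by
            gcongr; exact hχb _
        _ ≤ (c ^ 2 * (1 + x ^ 2)) * ((1 + x ^ 2) ^ n * (1 * ‖f x‖)) :=
            le_mul_of_one_le_left (by positivity) hx2
        _ = ((1 + x ^ 2) ^ (n + 1) * ‖f x‖) * c ^ 2 := by ring
        _ ≤ M * c ^ 2 := by gcongr; exact hM x
        _ ≤ δ / 2 := hc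
  -- inverse transform
  let ψ : 𝓢(ℝ, ℂ) := 𝓕⁻ F
  have hψF : 𝓕 ψ = F := FourierTransform.fourier_fourierInv_eq F
  have hψe : ∀ x, ψ (-x) = ψ x := by
    intro x
    have e : ∀ y, ψ y = 𝓕⁻ (F : ℝ → ℂ) y := fun y => by
      rw [← SchwartzMap.fourierInv_coe]
    rw [e, e]
    conv_rhs => rw [Real.fourierInv_eq_fourier_comp_neg]
    rw [Real.fourierInv_eq_fourier_neg, neg_neg]
    simp only [hFe]
  have hus : ∀ j : ℕ, ContDiff ℝ ∞ (fun x => χ (((j : ℝ) + 1)⁻¹ * x) * ψ x) := fun j =>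
    (hχ.comp (by fun_prop)).mul (ψ.smooth ⊤)
  have huc : ∀ j : ℕ, HasCompactSupport (fun x => χ (((j : ℝ) + 1)⁻¹ * x) * ψ x) := fun j =>
    aux_scale_cs hχc (by positivity) ψ
  let u : ℕ → 𝓢(ℝ, ℂ) := fun j => (huc j).toSchwartzMap (hus j)
  have hu : ∀ j x, u j x = χ (((j : ℝ) + 1)⁻¹ * x) * ψ x := fun j x => rfl
  have hlim := aux_tendsto hχ hχc hχ1 ψ u hu
  have hlim2 : Filter.Tendsto (fun j => 𝓕 (u j)) Filter.atTop (nhds F) := by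
    have := ((SchwartzMap.fourierTransformCLM ℂ (V := ℝ) (E := ℂ)).continuous.tendsto ψ).comp hlim
    rw [← hψF]
    exact this
  rw [(schwartz_withSeminorms ℝ ℝ ℂ).tendsto_nhds] at hlim2
  set η : ℝ := δ / 2 / (2 ^ n * 2) with hη
  have hη0 : 0 < η := by positivity
  obtain ⟨j, hj1, hj2⟩ := ((hlim2 (0, 0) η hη0).and (hlim2 (2 * n, 0) η hη0)).exists
  refine ⟨fun x => χ (((j : ℝ) + 1)⁻¹ * x) * ψ x, hus j, ?_, huc j, ?_⟩
  · intro x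
    simp [hψe, hχe]
  · intro x
    have hg : 𝓕 (fun x => χ (((j : ℝ) + 1)⁻¹ * x) * ψ x) x = (𝓕 (u j)) x := rfl
    rw [hg]
    have hb : (1 + x ^ 2) ^ n * ‖F x - 𝓕 (u j) x‖ ≤ δ / 2 := by
      set G : 𝓢(ℝ, ℂ) := 𝓕 (u j) - F with hG
      have e : ‖F x - 𝓕 (u j) x‖ = ‖G x‖ := by
        rw [norm_sub_rev, hG]; simp
      have a1 : ‖G x‖ ≤ η := (SchwartzMap.norm_le_seminorm ℝ G x).trans hj1.le
      have a2 : |x| ^ (2 * n) * ‖G x‖ ≤ η :=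
        (SchwartzMap.norm_pow_mul_le_seminorm ℝ G (2 * n) x).trans hj2.le
      rw [pow_mul, sq_abs] at a2
      have a3 : (1 + x ^ 2) ^ n ≤ 2 ^ n * (1 + (x ^ 2) ^ n) := by
        have hx0 : 0 ≤ x ^ 2 := sq_nonneg x
        rcases le_total (x ^ 2) 1 with hx | hx
        · calc (1 + x ^ 2) ^ n ≤ 2 ^ n := by gcongr; linarith
            _ ≤ _ := le_mul_of_one_le_right (by positivity) (by linarith [pow_nonneg hx0 n])
        · calc (1 + x ^ 2) ^ n ≤ (2 * x ^ 2) ^ n := by gcongr; linarith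
            _ = 2 ^ n * (x ^ 2) ^ n := mul_pow _ _ _
            _ ≤ _ := by gcongr; linarith
      rw [e]
      calc (1 + x ^ 2) ^ n * ‖G x‖ ≤ 2 ^ n * (1 + (x ^ 2) ^ n) * ‖G x‖ := by gcongr
        _ = 2 ^ n * (‖G x‖ + (x ^ 2) ^ n * ‖G x‖) := by ring
        _ ≤ 2 ^ n * (η + η) := by gcongr
        _ = δ / 2 := by rw [hη]; field_simp; ring
    calc (1 + x ^ 2) ^ n * ‖f x - 𝓕 (u j) x‖
        ≤ (1 + x ^ 2) ^ n * (‖f x - F x‖ + ‖F x - 𝓕 (u j) x‖) := by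
          gcongr; exact norm_sub_le_norm_sub_add_norm_sub _ _ _
      _ ≤ δ := by rw [mul_add]; linarith [hfF x]
end

section
/- Let δ > 0, R ∈ ℝ, and let (F_j)_{j∈ℕ} be a sequence of functions F_j : ℂ × ℂ → ℂ such that: (i) for every j and every s ∈ ℂ, the function λ ↦ F_j(λ, s) is complex differentiable on {Re(λ) > 0} with derivative at λ equal to F_j(λ, s+1); (ii) for every ε > 0 there exists M > 0 such that |F_j(λ, s)| ≤ ε for all j ∈ ℕ, all λ with Re(λ) ≥ M, and all s with R − 1 < Re(s) ≤ R + 1; (iii) for every ε > 0 there exists J ∈ ℕ such that |F_j(λ, s)| ≤ ε for all j ≥ J, all λ with Re(λ) ≥ δ, and all s with R < Re(s) ≤ R + 1. Then for every ε > 0 there exists J ∈ ℕ such that |F_j(λ, s)| ≤ ε for all j ≥ J, all λ with Re(λ) ≥ δ, and all s with R − 1 < Re(s) ≤ R. -/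
open Complex

/-- Inductive step propagating uniform convergence of a family of zeta-type functions from
the half plane `{Re s > R}` to `{Re s > R - 1}`, using the differential equation
`∂F_j/∂λ (λ, s) = F_j (λ, s + 1)` and uniform decay as `Re λ → ∞`. -/
theorem stmt_18 (δ R : ℝ) (hδ : 0 < δ) (F : ℕ → ℂ → ℂ → ℂ)
    (hderiv : ∀ (j : ℕ) (s : ℂ) (l : ℂ), 0 < l.re →
      HasDerivAt (fun μ : ℂ => F j μ s) (F j l (s + 1)) l)
    (hdecay : ∀ ε : ℝ, 0 < ε → ∃ M : ℝ, 0 < M ∧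
      ∀ (j : ℕ) (l s : ℂ), M ≤ l.re → R - 1 < s.re → s.re ≤ R + 1 → ‖F j l s‖ ≤ ε)
    (hconv : ∀ ε : ℝ, 0 < ε → ∃ J : ℕ,
      ∀ j ≥ J, ∀ (l s : ℂ), δ ≤ l.re → R < s.re → s.re ≤ R + 1 → ‖F j l s‖ ≤ ε) :
    ∀ ε : ℝ, 0 < ε → ∃ J : ℕ,
      ∀ j ≥ J, ∀ (l s : ℂ), δ ≤ l.re → R - 1 < s.re → s.re ≤ R → ‖F j l s‖ ≤ ε := by
  intro ε hε
  obtain ⟨M, hM, hdec⟩ := hdecay (ε / 2) (by positivity)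
  obtain ⟨J, hJ⟩ := hconv (ε / 2 / M) (by positivity)
  refine ⟨J, fun j hj l s hl hs1 hs2 => ?_⟩
  have hconvex : Convex ℝ {z : ℂ | δ ≤ z.re} := convex_halfSpace_re_ge δ
  have h1 : ‖F j (l + (M : ℂ)) s‖ ≤ ε / 2 :=
    hdec j _ s (by simp; linarith) hs1 (by linarith)
  have h2 := hconvex.norm_image_sub_le_of_norm_hasDerivWithin_le
    (f := fun μ : ℂ => F j μ s) (f' := fun z => F j z (s + 1)) (C := ε / 2 / M)
    (x := l + (M : ℂ)) (y := l)
    (fun z hz => (hderiv j s z (lt_of_lt_of_le hδ hz)).hasDerivWithinAt)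
    (fun z hz => hJ j hj z (s + 1) hz (by simp; linarith) (by simp; linarith))
    (show δ ≤ (l + (M : ℂ)).re by simp; linarith) hl
  have h3 : ‖l - (l + (M : ℂ))‖ = M := by
    simp [abs_of_pos hM]
  rw [h3, div_mul_cancel₀ _ hM.ne'] at h2
  have h4 := norm_le_norm_add_norm_sub' (F j l s) (F j (l + (M : ℂ)) s)
  linarith
end
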